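/- (Analytical Lieb–Sokal lemma.) Let p and q be nonzero multiaffine real stable polynomials in ℝ[z_1,…,z_n], and assume r = q(∂)p is not identically zero. Let a ∈ ℝ^n be above the roots of p and let b ∈ ℝ^n be above the roots of the flip q̄. For each i ∈ [n] set φ_i = (∂_i p/p)(a) + (∂_i q̄/q̄)(b), and assume φ_i > 0 for every i. Then the point c = a + b − (1/φ_1, …, 1/φ_n) is above the roots of r, i.e. r(c+t) ≠ 0 for every t ∈ ℝ^n with all coordinates nonnegative. -/

import Mathlib

/-- A multivariate real polynomial is real stable if it does not vanish when all
variables take values in the open upper half plane. -/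
def RealStable {σ : Type*} (p : MvPolynomial σ ℝ) : Prop :=
  ∀ z : σ → ℂ, (∀ i, 0 < (z i).im) → (MvPolynomial.aeval z) p ≠ 0

/-- degree at most 1 in each variable -/
def MultiAffine {σ : Type*} (p : MvPolynomial σ ℝ) : Prop :=
  ∀ m ∈ p.support, ∀ i, m i ≤ 1

/-- `a` is above the roots of `p` if `p` does not vanish on `a + ℝ₊ⁿ`. -/
def AboveRoots {σ : Type*} (p : MvPolynomial σ ℝ) (a : σ → ℝ) : Prop :=
  ∀ t : σ → ℝ, (∀ i, 0 ≤ t i) → MvPolynomial.eval (a + t) p ≠ 0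

/-- applying the differential-operator monomial `∂^m` to `p` -/
noncomputable def applyMon {σ : Type*} [Fintype σ] (m : σ →₀ ℕ) (p : MvPolynomial σ ℝ) :
    MvPolynomial σ ℝ :=
  (Finset.univ.toList (α := σ)).foldr
    (fun i g => (fun h => MvPolynomial.pderiv i h)^[m i] g) p

/-- `q(∂)p`: substitute `∂/∂zᵢ` for `zᵢ` in `q` and apply the resulting operator to `p`. -/
noncomputable def diffOp {σ : Type*} [Fintype σ] (q p : MvPolynomial σ ℝ) :
    MvPolynomial σ ℝ :=
  ∑ m ∈ q.support, MvPolynomial.coeff m q • applyMon m p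

/-- the flip of a multiaffine polynomial: `z^S ↦ z^{[n]∖S}` -/
noncomputable def flipPoly {σ : Type*} [Finite σ] (q : MvPolynomial σ ℝ) :
    MvPolynomial σ ℝ :=
  ∑ m ∈ q.support, MvPolynomial.monomial
    (Finsupp.equivFunOnFinite.symm fun i => 1 - m i) (MvPolynomial.coeff m q)

/-!
Introduce a second set of variables. Then `q(∂)p`, evaluated at `x + y`, is the result of applying
`∏ᵢ (∂/∂xᵢ + ∂/∂yᵢ)` to `p(x) q̄(y)`, and the factors can be applied one at a time. Each of them
sends a multiaffine real stable polynomial `P` to a multiaffine real stable polynomial or to `0`.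
If `φᵢ` is the sum of the barrier functions `∂P/P` in the directions `xᵢ` and `yᵢ` at a point above
the roots of `P`, then after applying the factor the coordinate `xᵢ` may be lowered by any
`0 ≤ δ` with `δ φᵢ ≤ 1`: the point stays above the roots, and no barrier function increases.
Hence the initial bounds remain valid at every later step. Both claims follow from the Rayleigh
inequalities `P ∂ᵢ∂ⱼP ≤ ∂ᵢP ∂ⱼP`, a consequence of stability: they make the barrier functions
nonincreasing above the roots and reduce each claim to an inequality for quadratics in `δ`.
-/

open MvPolynomial ComplexConjugate

section MultiAffine

variable {σ : Type*} {P Q : MvPolynomial σ ℝ}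

theorem multiAffine_iff_mem_restrictDegree : MultiAffine P ↔ P ∈ restrictDegree σ ℝ 1 :=
  (mem_restrictDegree σ P 1).symm

theorem multiAffine_iff_degreeOf_le : MultiAffine P ↔ ∀ i, degreeOf i P ≤ 1 := by
  simp only [MultiAffine, degreeOf_le_iff]
  exact ⟨fun h i m hm => h m hm i, fun h m hm i => h i m hm⟩

theorem MultiAffine.add (hP : MultiAffine P) (hQ : MultiAffine Q) : MultiAffine (P + Q) := by
  rw [multiAffine_iff_mem_restrictDegree] at *
  exact add_mem hP hQ

theorem MultiAffine.neg (hP : MultiAffine P) : MultiAffine (-P) := by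
  rw [multiAffine_iff_mem_restrictDegree] at *
  exact neg_mem hP

theorem MultiAffine.map_pderiv (hP : MultiAffine P) (i : σ) : MultiAffine (pderiv i P) := by
  intro m hm k
  rw [mem_support_iff, coeff_pderiv] at hm
  exact (Nat.le_add_right _ _).trans (hP _ (mem_support_iff.2 (left_ne_zero_of_mul hm)) k)

theorem MultiAffine.pderiv_pderiv_self (hP : MultiAffine P) (i : σ) :
    pderiv i (pderiv i P) = 0 := by
  ext m
  rw [coeff_pderiv, coeff_pderiv, coeff_zero]
  by_contra h
  have hle := hP _ (mem_support_iff.2 (left_ne_zero_of_mul (left_ne_zero_of_mul h))) i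
  simp at hle

theorem pderiv_pderiv_comm {R : Type*} [CommRing R] (i j : σ) (P : MvPolynomial σ R) :
    pderiv i (pderiv j P) = pderiv j (pderiv i P) := by
  classical
  have h : ⁅(pderiv i : Derivation R _ _), pderiv j⁆ = 0 := derivation_ext fun k => by
    rw [Derivation.commutator_apply, pderiv_X, pderiv_X]
    simp [Pi.single_apply, apply_ite]
  exact sub_eq_zero.1 ((Derivation.commutator_apply _).symm.trans (DFunLike.congr_fun h P))

theorem MultiAffine.aeval_add_single [DecidableEq σ] {A : Type*} [CommRing A] [Algebra ℝ A]
    (hP : MultiAffine P) (w : σ → A) (i : σ) (s : A) :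
    aeval (w + Pi.single i s) P = aeval w P + s * aeval w (pderiv i P) := by
  have monomial_case (m : σ →₀ ℕ) (c : ℝ) (hm : m i ≤ 1) :
      aeval (w + Pi.single i s) (monomial m c) =
        aeval w (monomial m c) + s * aeval w (pderiv i (monomial m c)) := by
    have hvars : i ∉ (monomial (m.erase i) c).vars := by
      simp +contextual [mem_vars_iff_mem_support, coeff_monomial]
    have herase : aeval (w + Pi.single i s) (monomial (m.erase i) c) =
        aeval w (monomial (m.erase i) c) :=
      eval₂Hom_congr' rfl (fun k hk _ => by simp [ne_of_mem_of_not_mem hk hvars]) rfl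
    have hsplit : monomial m c = X i ^ m i * monomial (m.erase i) c := by
      rw [X_pow_eq_monomial, monomial_mul, one_mul, Finsupp.single_add_erase]
    rw [hsplit, pderiv_mul, pderiv_eq_zero_of_notMem_vars hvars, map_mul, herase]
    obtain h | h := Nat.le_one_iff_eq_zero_or_eq_one.1 hm
    · simp [h]
    · simp [h, add_mul]
  rw [P.as_sum]
  simp only [map_sum, Finset.mul_sum, ← Finset.sum_add_distrib]
  exact Finset.sum_congr rfl fun m hm => monomial_case m _ (hP m hm i)

theorem MultiAffine.eval_add_single [DecidableEq σ] (hP : MultiAffine P) (x : σ → ℝ) (i : σ)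
    (s : ℝ) :
    eval (x + Pi.single i s) P = eval x P + s * eval x (pderiv i P) :=
  hP.aeval_add_single x i s

end MultiAffine

section Stability

variable {σ : Type*}

/-- The product of open upper half planes, on which real stable polynomials do not vanish. -/
def upperHalfSpace (σ : Type*) : Set (σ → ℂ) :=
  Set.univ.pi fun _ => {z : ℂ | 0 < z.im}

theorem isOpen_upperHalfSpace [Finite σ] : IsOpen (upperHalfSpace σ) :=
  isOpen_set_pi Set.finite_univ fun _ _ => isOpen_lt continuous_const Complex.continuous_im

theorem isPreconnected_upperHalfSpace : IsPreconnected (upperHalfSpace σ) :=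
  isPreconnected_univ_pi fun _ => (convex_halfSpace_im_gt 0).isPreconnected

theorem closure_upperHalfSpace :
    closure (upperHalfSpace σ) = Set.univ.pi fun _ => {z : ℂ | 0 ≤ z.im} := by
  simp only [upperHalfSpace, closure_pi_set, Complex.closure_setOfPred_lt_im]

theorem RealStable.aeval_ne_zero {P : MvPolynomial σ ℝ} (hP : RealStable P) {z : σ → ℂ}
    (hz : z ∈ upperHalfSpace σ) : aeval z P ≠ 0 :=
  hP z fun i => hz i trivial

theorem eq_zero_of_aeval_upperHalfSpace_eq_zero {P : MvPolynomial σ ℝ}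
    (h : ∀ z ∈ upperHalfSpace σ, aeval z P = 0) : P = 0 := by
  refine map_injective _ (algebraMap ℝ ℂ).injective ?_
  refine funext_set (fun _ => {z : ℂ | 0 < z.im}) (fun _ => ?_) fun z hz => ?_
  · exact infinite_of_mem_nhds Complex.I
      ((isOpen_lt continuous_const Complex.continuous_im).mem_nhds (by simp))
  · rw [eval_map, ← aeval_def, h z hz, map_zero, map_zero]

theorem continuous_aeval_complex (P : MvPolynomial σ ℝ) :
    Continuous fun z : σ → ℂ => aeval z P := by
  simp only [aeval_def, eval₂_eq]
  fun_prop

theorem aeval_ofReal (P : MvPolynomial σ ℝ) (x : σ → ℝ) :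
    aeval (fun i => (x i : ℂ)) P = (eval x P : ℂ) :=
  aeval_algebraMap_apply ℂ x P

theorem RealStable.of_im_mul_conj_nonneg [Finite σ] {P Q : MvPolynomial σ ℝ} (hP : RealStable P)
    (hQ : Q ≠ 0)
    (h : ∀ z ∈ upperHalfSpace σ, 0 ≤ (aeval z P * conj (aeval z Q)).im) : RealStable Q := by
  -- `Q / P` maps the upper half space into the closed lower half plane, so by the open mapping
  -- theorem it is constant as soon as it vanishes somewhere.
  cases nonempty_fintype σ
  intro z hz hzQ
  have hzH : z ∈ upperHalfSpace σ := fun i _ => hz i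
  set F : (σ → ℂ) → ℂ := fun z => aeval z Q / aeval z P with hF
  have hF0 : F z = 0 := by simp [hF, hzQ]
  have hFim : ∀ z ∈ upperHalfSpace σ, (F z).im ≤ 0 := fun z hz => by
    have : (F z).im = -((aeval z P * conj (aeval z Q)).im / Complex.normSq (aeval z P)) := by
      simp only [hF, Complex.div_im, Complex.mul_im, Complex.conj_re, Complex.conj_im]
      ring
    rw [this, neg_nonpos]
    exact div_nonneg (h z hz) (Complex.normSq_nonneg _)
  have haeval (R : MvPolynomial σ ℝ) :
      AnalyticOnNhd ℂ (fun z : σ → ℂ => aeval z R) (upperHalfSpace σ) :=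
    .aeval_mvPolynomial (fun i z _ => (ContinuousLinearMap.proj (R := ℂ) i).analyticAt z) R
  have hFan : AnalyticOnNhd ℂ F (upperHalfSpace σ) :=
    (haeval Q).div (haeval P) fun z hz => hP.aeval_ne_zero hz
  obtain ⟨c, hc⟩ | hopen := hFan.is_constant_or_isOpen isPreconnected_upperHalfSpace
  · refine hQ (eq_zero_of_aeval_upperHalfSpace_eq_zero fun w hw => ?_)
    have hFw : F w = 0 := by rw [hc w hw, ← hc z hzH, hF0]
    exact (div_eq_zero_iff.1 hFw).resolve_right (hP.aeval_ne_zero hw)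
  · have hsub : F '' upperHalfSpace σ ⊆ interior {w | w.im ≤ 0} :=
      interior_maximal (Set.image_subset_iff.2 hFim) (hopen _ subset_rfl isOpen_upperHalfSpace)
    have h0 : (0 : ℂ) ∈ interior {w : ℂ | w.im ≤ 0} := hsub ⟨z, hzH, hF0⟩
    simp [Complex.interior_setOfPred_im_le] at h0

theorem RealStable.im_mul_conj_pderiv_nonneg {P : MvPolynomial σ ℝ} (hs : RealStable P)
    (hP : MultiAffine P) (i : σ) {z : σ → ℂ} (hz : z ∈ upperHalfSpace σ) :
    0 ≤ (aeval z P * conj (aeval z (pderiv i P))).im := by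
  classical
  by_contra! hneg
  set u := aeval z P
  set v := aeval z (pderiv i P)
  have hv : v ≠ 0 := fun h => by simp [h] at hneg
  have him : 0 < (-u / v).im := by
    have : (-u / v).im = -(u * conj v).im / Complex.normSq v := by
      simp only [Complex.div_im, Complex.mul_im, Complex.conj_re, Complex.conj_im,
        Complex.neg_re, Complex.neg_im]
      ring
    rw [this]
    exact div_pos (neg_pos.2 hneg) (Complex.normSq_pos.2 hv)
  -- `P` vanishes at the point obtained by moving `z i` by `-P / ∂ᵢP`.
  refine hs (z + Pi.single i (-u / v)) (fun k => ?_) ?_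
  · obtain rfl | hk := eq_or_ne k i
    · simpa using add_pos (hz k trivial) him
    · simpa [hk] using hz k trivial
  · rw [hP.aeval_add_single, div_mul_cancel₀ _ hv, add_neg_cancel]

/-- The Rayleigh inequalities `P ∂ᵢ∂ⱼP ≤ ∂ᵢP ∂ⱼP` on all of `ℝ^σ`, which for multiaffine
polynomials characterize stability. -/
def Rayleigh (P : MvPolynomial σ ℝ) : Prop :=
  ∀ (x : σ → ℝ) (i j : σ),
    eval x P * eval x (pderiv j (pderiv i P)) ≤ eval x (pderiv i P) * eval x (pderiv j P)

theorem RealStable.rayleigh {P : MvPolynomial σ ℝ} (hs : RealStable P) (hP : MultiAffine P) :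
    Rayleigh P := by
  classical
  intro x i j
  have hclosed : IsClosed {z : σ → ℂ | 0 ≤ (aeval z P * conj (aeval z (pderiv i P))).im} :=
    isClosed_le continuous_const <| Complex.continuous_im.comp <|
      (continuous_aeval_complex P).mul <|
        Complex.continuous_conj.comp (continuous_aeval_complex (pderiv i P))
  have hmem : (fun k => (x k : ℂ)) + Pi.single j Complex.I ∈ closure (upperHalfSpace σ) := by
    rw [closure_upperHalfSpace]
    intro k _
    obtain rfl | hk := eq_or_ne k j <;> simp [*]
  have h : 0 ≤ (aeval ((fun k => (x k : ℂ)) + Pi.single j Complex.I) P *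
      conj (aeval ((fun k => (x k : ℂ)) + Pi.single j Complex.I) (pderiv i P))).im :=
    closure_minimal (fun z hz => hs.im_mul_conj_pderiv_nonneg hP i hz) hclosed hmem
  rw [hP.aeval_add_single, (hP.map_pderiv i).aeval_add_single] at h
  simp only [aeval_ofReal, map_add, map_mul, Complex.conj_ofReal, Complex.conj_I, Complex.add_re,
    Complex.add_im, Complex.mul_re, Complex.mul_im, Complex.neg_re, Complex.neg_im,
    Complex.ofReal_re, Complex.ofReal_im, Complex.I_re, Complex.I_im] at h
  linarith

theorem RealStable.neg {P : MvPolynomial σ ℝ} (hP : RealStable P) : RealStable (-P) :=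
  fun z hz => by simpa using hP z hz

end Stability

section PairDeriv

variable {σ R : Type*} [CommRing R] {P : MvPolynomial σ ℝ}

/-- The operator `∂ᵢ + ∂ⱼ`. Applied to `p(x) q̄(y)` for matching variables `xᵢ` and `yᵢ`, it
implements one coordinate of `q(∂)p`. -/
noncomputable def pairDeriv (i j : σ) : Derivation R (MvPolynomial σ R) (MvPolynomial σ R) :=
  pderiv i + pderiv j

theorem pairDeriv_apply (i j : σ) (P : MvPolynomial σ R) :
    pairDeriv i j P = pderiv i P + pderiv j P :=
  rfl

theorem pderiv_pairDeriv (i j k : σ) (P : MvPolynomial σ R) :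
    pderiv k (pairDeriv i j P) = pairDeriv i j (pderiv k P) := by
  rw [pairDeriv_apply, map_add, pderiv_pderiv_comm k i, pderiv_pderiv_comm k j, pairDeriv_apply]

theorem MultiAffine.map_pairDeriv (hP : MultiAffine P) (i j : σ) :
    MultiAffine (pairDeriv i j P) :=
  (hP.map_pderiv i).add (hP.map_pderiv j)

theorem RealStable.map_pairDeriv [Finite σ] (hs : RealStable P) (hP : MultiAffine P) {i j : σ}
    (h : pairDeriv i j P ≠ 0) : RealStable (pairDeriv i j P) := by
  refine hs.of_im_mul_conj_nonneg h fun z hz => ?_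
  rw [pairDeriv_apply, map_add, map_add, mul_add, Complex.add_im]
  exact add_nonneg (hs.im_mul_conj_pderiv_nonneg hP i hz) (hs.im_mul_conj_pderiv_nonneg hP j hz)

theorem Rayleigh.mul_pairDeriv_le (h : Rayleigh P) (x : σ → ℝ) (i j k : σ) :
    eval x P * eval x (pairDeriv i j (pderiv k P)) ≤
      eval x (pairDeriv i j P) * eval x (pderiv k P) := by
  simp only [pairDeriv_apply, map_add]
  linarith [h x k i, h x k j]

variable [DecidableEq σ]

theorem MultiAffine.eval_pair_add_single (hP : MultiAffine P) (x : σ → ℝ) (i j : σ) (s : ℝ) :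
    eval (x + Pi.single i s + Pi.single j s) P =
      eval x P + s * eval x (pairDeriv i j P) + s ^ 2 * eval x (pderiv i (pderiv j P)) := by
  rw [hP.eval_add_single, hP.eval_add_single, (hP.map_pderiv j).eval_add_single, pairDeriv_apply,
    map_add]
  ring

theorem MultiAffine.eval_pairDeriv_add_single (hP : MultiAffine P) (x : σ → ℝ) (i j : σ) (s : ℝ) :
    eval (x + Pi.single i s) (pairDeriv i j P) =
      eval x (pairDeriv i j P) + s * eval x (pderiv i (pderiv j P)) := by
  rw [(hP.map_pairDeriv i j).eval_add_single, pairDeriv_apply, map_add, map_add,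
    hP.pderiv_pderiv_self, zero_add]

theorem MultiAffine.eval_pairDeriv_pair_add_single (hP : MultiAffine P) (x : σ → ℝ) (i j : σ)
    (s : ℝ) :
    eval (x + Pi.single i s + Pi.single j s) (pairDeriv i j P) =
      eval x (pairDeriv i j P) + 2 * s * eval x (pderiv i (pderiv j P)) := by
  have hji : pderiv j (pairDeriv i j P) = pderiv i (pderiv j P) := by
    rw [pairDeriv_apply, map_add, hP.pderiv_pderiv_self, add_zero, pderiv_pderiv_comm]
  rw [(hP.map_pairDeriv i j).eval_add_single, hP.eval_pairDeriv_add_single, hji,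
    ((hP.map_pderiv j).map_pderiv i).eval_add_single,
    (hP.map_pderiv j).pderiv_pderiv_self, map_zero]
  ring

end PairDeriv

section Barrier

variable {σ : Type*} {P : MvPolynomial σ ℝ} {w x : σ → ℝ}

/-- `P` is positive on the orthant `w + ℝ₊^σ`: up to the sign of `P`, the point `w` is above the
roots of `P`. -/
def PosAbove (P : MvPolynomial σ ℝ) (w : σ → ℝ) : Prop :=
  ∀ x, w ≤ x → 0 < eval x P

/-- The barrier function `∂ᵢP / P`, the logarithmic derivative of `P` in direction `i`. -/
noncomputable def barrier (P : MvPolynomial σ ℝ) (i : σ) (w : σ → ℝ) : ℝ :=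
  eval w (pderiv i P) / eval w P

theorem aboveRoots_iff {p : MvPolynomial σ ℝ} {a : σ → ℝ} :
    AboveRoots p a ↔ ∀ x, a ≤ x → eval x p ≠ 0 :=
  ⟨fun h x hx => add_sub_cancel a x ▸ h (x - a) fun i => sub_nonneg.2 (hx i),
    fun h _ ht => h _ (le_add_of_nonneg_right ht)⟩

theorem AboveRoots.eval_ne_zero (h : AboveRoots P w) : eval w P ≠ 0 :=
  aboveRoots_iff.1 h w le_rfl

theorem AboveRoots.posAbove_or_posAbove_neg (h : AboveRoots P w) :
    PosAbove P w ∨ PosAbove (-P) w := by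
  by_contra! hcon
  simp only [PosAbove, not_forall, not_lt, map_neg, neg_nonpos] at hcon
  obtain ⟨⟨x, hx, hxP⟩, y, hy, hyP⟩ := hcon
  obtain ⟨z, hz, hzP⟩ := (convex_Ici w).isPreconnected.intermediate_value₂ hx hy
    (continuous_eval P).continuousOn continuousOn_const hxP hyP
  exact aboveRoots_iff.1 h z hz hzP

theorem barrier_neg (P : MvPolynomial σ ℝ) (i : σ) : barrier (-P) i = barrier P i := by
  ext w
  rw [barrier, barrier, map_neg, map_neg, map_neg, neg_div_neg_eq]

theorem PosAbove.mono (h : PosAbove P w) (hx : w ≤ x) : PosAbove P x :=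
  fun y hy => h y (hx.trans hy)

theorem PosAbove.eval_pos (h : PosAbove P w) : 0 < eval w P :=
  h w le_rfl

theorem nonneg_of_forall_affine_nonneg {𝕜 : Type*} [Field 𝕜] [LinearOrder 𝕜]
    [IsStrictOrderedRing 𝕜] {a b : 𝕜} (h : ∀ s, 0 ≤ s → 0 ≤ a + s * b) : 0 ≤ b := by
  by_contra! hb
  have hs := h ((|a| + 1) / -b) (div_nonneg (by positivity) (neg_nonneg.2 hb.le))
  rw [div_neg, neg_mul, div_mul_cancel₀ _ hb.ne] at hs
  linarith [le_abs_self a]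

theorem PosAbove.eval_pderiv_nonneg (h : PosAbove P w) (hP : MultiAffine P) (i : σ) :
    0 ≤ eval w (pderiv i P) := by
  classical
  refine nonneg_of_forall_affine_nonneg (a := eval w P) fun s hs => ?_
  rw [← hP.eval_add_single]
  exact (h _ (le_add_of_nonneg_right (Pi.single_nonneg.2 hs))).le

theorem PosAbove.eval_pderiv_pderiv_nonneg (h : PosAbove P w) (hP : MultiAffine P) (i j : σ) :
    0 ≤ eval w (pderiv i (pderiv j P)) := by
  classical
  refine nonneg_of_forall_affine_nonneg (a := eval w (pderiv j P)) fun s hs => ?_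
  rw [← (hP.map_pderiv j).eval_add_single]
  exact (h.mono (le_add_of_nonneg_right (Pi.single_nonneg.2 hs))).eval_pderiv_nonneg hP j

theorem antitoneOn_Ici_of_add_single_le {α β : Type*} [AddCommGroup α] [PartialOrder α]
    [IsOrderedAddMonoid α] [Preorder β] [Finite σ] [DecidableEq σ] {ψ : (σ → α) → β} {w : σ → α}
    (h : ∀ x, w ≤ x → ∀ i s, 0 ≤ s → ψ (x + Pi.single i s) ≤ ψ x) :
    AntitoneOn ψ (Set.Ici w) := by
  cases nonempty_fintype σ
  intro x hx y _ hxy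
  have hsingle (i : σ) : 0 ≤ (Pi.single i (y i - x i) : σ → α) :=
    Pi.single_nonneg.2 (sub_nonneg.2 (hxy i))
  have hsum (S : Finset σ) : ψ (x + ∑ i ∈ S, Pi.single i (y i - x i)) ≤ ψ x := by
    induction S using Finset.induction_on with
    | empty => rw [Finset.sum_empty, add_zero]
    | insert i S hi ih =>
      rw [Finset.sum_insert hi, add_comm (Pi.single i _), ← add_assoc]
      refine (h _ ?_ i _ (sub_nonneg.2 (hxy i))).trans ih
      exact le_add_of_le_of_nonneg hx (Finset.sum_nonneg fun i _ => hsingle i)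
  have hy : ∑ i, Pi.single i (y i - x i) = y - x := Finset.univ_sum_single (y - x)
  simpa only [hy, add_sub_cancel] using hsum Finset.univ

theorem PosAbove.antitoneOn_barrier [Finite σ] (h : PosAbove P w) (hP : MultiAffine P)
    (hR : Rayleigh P) (i : σ) : AntitoneOn (barrier P i) (Set.Ici w) := by
  classical
  refine antitoneOn_Ici_of_add_single_le fun x hx k s hs => ?_
  have hpos : 0 < eval (x + Pi.single k s) P :=
    h _ (le_add_of_le_of_nonneg hx (Pi.single_nonneg.2 hs))
  rw [barrier, barrier, div_le_div_iff₀ hpos (h x hx), hP.eval_add_single,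
    (hP.map_pderiv i).eval_add_single]
  linarith [mul_le_mul_of_nonneg_left (hR x i k) hs]

theorem PosAbove.pderiv_eq_zero [Finite σ] (h : PosAbove P w) (hP : MultiAffine P)
    (hR : Rayleigh P) {i : σ} (hi : eval w (pderiv i P) = 0) : pderiv i P = 0 := by
  refine funext_set (fun k => Set.Ici (w k)) (fun k => Set.Ici_infinite (w k)) fun x hx => ?_
  have hwx : w ≤ x := fun k => hx k trivial
  have hle : barrier P i x ≤ 0 := by
    simpa [barrier, hi] using h.antitoneOn_barrier hP hR i Set.self_mem_Ici hwx hwx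
  rw [map_zero]
  exact le_antisymm ((div_le_iff₀ (h x hwx)).1 hle |>.trans_eq (zero_mul _))
    ((h.mono hwx).eval_pderiv_nonneg hP i)

theorem PosAbove.posAbove_pairDeriv [Finite σ] (h : PosAbove P w) (hP : MultiAffine P)
    (hR : Rayleigh P) {i j : σ} (h0 : pairDeriv i j P ≠ 0) : PosAbove (pairDeriv i j P) w := by
  intro x hx
  have hi := (h.mono hx).eval_pderiv_nonneg hP i
  have hj := (h.mono hx).eval_pderiv_nonneg hP j
  rw [pairDeriv_apply, map_add]
  refine (add_nonneg hi hj).lt_of_ne' fun hsum => h0 ?_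
  obtain ⟨hi0, hj0⟩ := (add_eq_zero_iff_of_nonneg hi hj).1 hsum
  rw [pairDeriv_apply, (h.mono hx).pderiv_eq_zero hP hR hi0,
    (h.mono hx).pderiv_eq_zero hP hR hj0, add_zero]

theorem mul_barrier_add_barrier_le_one_iff (h : 0 < eval w P) {i j : σ} {δ : ℝ} :
    δ * (barrier P i w + barrier P j w) ≤ 1 ↔ δ * eval w (pairDeriv i j P) ≤ eval w P := by
  rw [barrier, barrier, ← add_div, mul_div_assoc', div_le_one h, pairDeriv_apply, map_add]

variable [DecidableEq σ] {i j : σ} {δ : ℝ}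

theorem PosAbove.posAbove_pairDeriv_sub_single [Finite σ] (h : PosAbove P w) (hP : MultiAffine P)
    (hR : Rayleigh P) (h0 : pairDeriv i j P ≠ 0) (hδ0 : 0 ≤ δ)
    (hδ : δ * (barrier P i w + barrier P j w) ≤ 1) :
    PosAbove (pairDeriv i j P) (w - Pi.single i δ) := by
  intro y hy
  obtain ⟨x, rfl⟩ : ∃ x, x + Pi.single i (-δ) = y :=
    ⟨y + Pi.single i δ, by rw [Pi.single_neg, add_neg_cancel_right]⟩
  have hx : w ≤ x := by
    rwa [Pi.single_neg, ← sub_eq_add_neg, sub_le_sub_iff_right] at hy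
  have hδx : δ * eval x (pairDeriv i j P) ≤ eval x P := by
    rw [← mul_barrier_add_barrier_le_one_iff (h x hx)]
    refine (mul_le_mul_of_nonneg_left ?_ hδ0).trans hδ
    exact add_le_add (h.antitoneOn_barrier hP hR i Set.self_mem_Ici hx hx)
      (h.antitoneOn_barrier hP hR j Set.self_mem_Ici hx hx)
  have hpos := h.posAbove_pairDeriv hP hR h0 x hx
  rw [hP.eval_pairDeriv_add_single]
  have hA := h x hx
  have hRx := hR x j i
  rw [pairDeriv_apply, map_add] at hδx hpos ⊢
  set A := eval x P
  set B := eval x (pderiv i P)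
  set C := eval x (pderiv j P)
  set D := eval x (pderiv i (pderiv j P))
  have hAMGM : 4 * (A * D) ≤ (B + C) ^ 2 := by linarith [sq_nonneg (B - C)]
  have hδD : 4 * (δ * (A * D)) ≤ A * (B + C) := by
    linarith [mul_le_mul_of_nonneg_left hAMGM hδ0, mul_le_mul_of_nonneg_right hδx hpos.le]
  refine pos_of_mul_pos_right (a := A) ?_ hA.le
  linarith [mul_pos hA hpos]

theorem barrier_quadratic_le {𝕜 : Type*} [Field 𝕜] [LinearOrder 𝕜] [IsStrictOrderedRing 𝕜]
    {A₀ E₀ D₀ A₁ E₁ D₁ δ : 𝕜} (hA : 0 < A₀) (hD : 0 ≤ D₀)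
    (hδ0 : 0 ≤ δ) (hδ : δ * E₀ ≤ A₀) (h0 : A₀ * E₁ ≤ E₀ * A₁)
    (h1 : (A₀ - δ * E₀ + δ ^ 2 * D₀) * (E₁ - 2 * δ * D₁) ≤
      (E₀ - 2 * δ * D₀) * (A₁ - δ * E₁ + δ ^ 2 * D₁)) :
    (E₁ - δ * D₁) * A₀ ≤ A₁ * (E₀ - δ * D₀) := by
  -- `h0` and `h1` say that the quadratic `W₀ + 2 W₁ t + W₂ t²` is nonnegative at `0` and `-δ`,
  -- and `A₀ W₂ = E₀ W₁ - D₀ W₀`.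
  set W₀ := E₀ * A₁ - A₀ * E₁ with hW₀
  set W₁ := D₀ * A₁ - A₀ * D₁ with hW₁
  have hW₀nonneg : 0 ≤ W₀ := sub_nonneg.2 h0
  suffices δ * W₁ ≤ W₀ by linarith
  obtain hneg | hpos := le_total W₁ 0
  · exact (mul_nonpos_of_nonneg_of_nonpos hδ0 hneg).trans hW₀nonneg
  have hquad : 0 ≤ A₀ * W₀ - 2 * δ * A₀ * W₁ + δ ^ 2 * (E₀ * W₁ - D₀ * W₀) := by
    have := mul_le_mul_of_nonneg_left h1 hA.le
    rw [hW₀, hW₁]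
    linarith
  have hE : δ ^ 2 * (E₀ * W₁) ≤ δ * A₀ * W₁ := by
    linarith [mul_le_mul_of_nonneg_left hδ (mul_nonneg hδ0 hpos)]
  have hD₀ : 0 ≤ δ ^ 2 * (D₀ * W₀) := by positivity
  exact le_of_mul_le_mul_left (by linarith) hA

theorem PosAbove.barrier_pairDeriv_le [Finite σ] (h : PosAbove P w) (hP : MultiAffine P)
    (hR : Rayleigh P) (h0 : pairDeriv i j P ≠ 0) (hδ0 : 0 ≤ δ)
    (hδ : δ * (barrier P i w + barrier P j w) ≤ 1) (k : σ) :
    barrier (pairDeriv i j P) k (w - Pi.single i δ) ≤ barrier P k w := by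
  have hpos := (h.posAbove_pairDeriv_sub_single hP hR h0 hδ0 hδ).eval_pos
  have hRδ := hR.mul_pairDeriv_le (w + Pi.single i (-δ) + Pi.single j (-δ)) i j k
  rw [barrier, barrier, div_le_div_iff₀ hpos h.eval_pos, pderiv_pairDeriv, sub_eq_add_neg,
    ← Pi.single_neg]
  have hkP := hP.map_pderiv k
  rw [hP.eval_pairDeriv_add_single, hkP.eval_pairDeriv_add_single]
  rw [hP.eval_pair_add_single, hkP.eval_pair_add_single, hP.eval_pairDeriv_pair_add_single,
    hkP.eval_pairDeriv_pair_add_single] at hRδ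
  have hle := barrier_quadratic_le (D₁ := eval w (pderiv i (pderiv j (pderiv k P)))) h.eval_pos
    (h.eval_pderiv_pderiv_nonneg hP i j) hδ0
    ((mul_barrier_add_barrier_le_one_iff h.eval_pos).1 hδ) (hR.mul_pairDeriv_le w i j k)
    (by linarith)
  linarith

end Barrier

section IterPairDeriv

variable {σ ι R : Type*} [CommRing R] {P : MvPolynomial σ ℝ}

/-- The composition of the operators `∂_{f m} + ∂_{g m}` for `m` in a list, the last entry acting
first. -/
noncomputable def iterPairDeriv (f g : ι → σ) (L : List ι) : Module.End R (MvPolynomial σ R) :=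
  (L.map fun m => (pairDeriv (f m) (g m)).toLinearMap).prod

theorem iterPairDeriv_nil (f g : ι → σ) : iterPairDeriv (R := R) f g [] = 1 :=
  rfl

theorem iterPairDeriv_cons (f g : ι → σ) (m : ι) (L : List ι) (P : MvPolynomial σ R) :
    iterPairDeriv f g (m :: L) P = pairDeriv (f m) (g m) (iterPairDeriv f g L P) := by
  rw [iterPairDeriv, List.map_cons, List.prod_cons]
  rfl

theorem MultiAffine.map_iterPairDeriv (hP : MultiAffine P) (f g : ι → σ) (L : List ι) :
    MultiAffine (iterPairDeriv f g L P) := by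
  induction L with
  | nil => exact hP
  | cons m L ih => exact iterPairDeriv_cons f g m L P ▸ ih.map_pairDeriv (f m) (g m)

variable [Finite σ] {f g : ι → σ} {L : List ι}

theorem RealStable.map_iterPairDeriv (hs : RealStable P) (hP : MultiAffine P)
    (h0 : iterPairDeriv f g L P ≠ 0) : RealStable (iterPairDeriv f g L P) := by
  induction L with
  | nil => exact hs
  | cons m L ih =>
    rw [iterPairDeriv_cons] at h0 ⊢
    exact (ih (ne_zero_of_map h0)).map_pairDeriv (hP.map_iterPairDeriv f g L) h0

variable [DecidableEq σ] {w : σ → ℝ} {δ : ι → ℝ}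

theorem PosAbove.map_iterPairDeriv (h : PosAbove P w) (hs : RealStable P) (hP : MultiAffine P)
    (hδ0 : ∀ m, 0 ≤ δ m) (hδ : ∀ m, δ m * (barrier P (f m) w + barrier P (g m) w) ≤ 1)
    (h0 : iterPairDeriv f g L P ≠ 0) :
    PosAbove (iterPairDeriv f g L P) (w - (L.map fun m => Pi.single (f m) (δ m)).sum) ∧
      ∀ k, barrier (iterPairDeriv f g L P) k (w - (L.map fun m => Pi.single (f m) (δ m)).sum) ≤
        barrier P k w := by
  induction L with
  | nil => simpa [iterPairDeriv_nil] using h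
  | cons m L ih =>
    rw [iterPairDeriv_cons] at h0 ⊢
    rw [List.map_cons, List.sum_cons, add_comm (Pi.single _ _), ← sub_sub]
    have hQ0 : iterPairDeriv f g L P ≠ 0 := ne_zero_of_map h0
    have hQ := hP.map_iterPairDeriv f g L
    have hR := (hs.map_iterPairDeriv hP hQ0).rayleigh hQ
    obtain ⟨hpos, hbarrier⟩ := ih hQ0
    have hδm := (mul_le_mul_of_nonneg_left
      (add_le_add (hbarrier (f m)) (hbarrier (g m))) (hδ0 m)).trans (hδ m)
    exact ⟨hpos.posAbove_pairDeriv_sub_single hQ hR h0 (hδ0 m) hδm, fun k =>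
      (hpos.barrier_pairDeriv_le hQ hR h0 (hδ0 m) hδm k).trans (hbarrier k)⟩

theorem AboveRoots.map_iterPairDeriv (h : AboveRoots P w) (hs : RealStable P)
    (hP : MultiAffine P) (hδ0 : ∀ m, 0 ≤ δ m)
    (hδ : ∀ m, δ m * (barrier P (f m) w + barrier P (g m) w) ≤ 1)
    (h0 : iterPairDeriv f g L P ≠ 0) :
    AboveRoots (iterPairDeriv f g L P) (w - (L.map fun m => Pi.single (f m) (δ m)).sum) := by
  refine aboveRoots_iff.2 fun x hx => ?_
  obtain hpos | hneg := h.posAbove_or_posAbove_neg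
  · exact ((hpos.map_iterPairDeriv hs hP hδ0 hδ h0).1 x hx).ne'
  · have hneg' := (hneg.map_iterPairDeriv hs.neg hP.neg hδ0 (by simpa only [barrier_neg])
      (by rwa [map_neg, neg_ne_zero])).1 x hx
    rw [map_neg, map_neg, neg_pos] at hneg'
    exact hneg'.ne

end IterPairDeriv

section Flip

variable {σ : Type*}

theorem multiAffine_flipPoly [Finite σ] (q : MvPolynomial σ ℝ) : MultiAffine (flipPoly q) := by
  rw [multiAffine_iff_mem_restrictDegree, flipPoly]
  refine sum_mem fun m _ => ?_
  rw [← multiAffine_iff_mem_restrictDegree]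
  intro n hn i
  rw [Finset.mem_singleton.1 (support_monomial_subset hn),
    Finsupp.equivFunOnFinite_symm_apply_apply]
  exact Nat.sub_le 1 (m i)

theorem MultiAffine.aeval_flipPoly [Fintype σ] {A : Type*} [Field A] [Algebra ℝ A]
    {q : MvPolynomial σ ℝ} (hq : MultiAffine q) {z : σ → A} (hz : ∀ i, z i ≠ 0) :
    aeval z (flipPoly q) = (∏ i, z i) * aeval z⁻¹ q := by
  rw [aeval_def z⁻¹, eval₂_eq', flipPoly, map_sum, Finset.mul_sum]
  refine Finset.sum_congr rfl fun m hm => ?_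
  rw [aeval_monomial, Finsupp.prod_fintype _ _ fun _ => pow_zero _, mul_left_comm,
    ← Finset.prod_mul_distrib]
  congr 1
  refine Finset.prod_congr rfl fun i _ => ?_
  rw [Finsupp.equivFunOnFinite_symm_apply_apply, Pi.inv_apply]
  obtain h | h := Nat.le_one_iff_eq_zero_or_eq_one.1 (hq m hm i) <;> simp [h, hz i]

theorem aeval_conj (q : MvPolynomial σ ℝ) (z : σ → ℂ) :
    aeval (fun i => conj (z i)) q = conj (aeval z q) :=
  (comp_aeval_apply z Complex.conjAe.toAlgHom q).symm

theorem RealStable.flipPoly [Finite σ] {q : MvPolynomial σ ℝ} (hs : RealStable q)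
    (hq : MultiAffine q) : RealStable (flipPoly q) := by
  cases nonempty_fintype σ
  intro z hz
  have hz0 (i : σ) : z i ≠ 0 := fun h => by simpa [h] using hz i
  rw [hq.aeval_flipPoly hz0]
  refine mul_ne_zero (Finset.prod_ne_zero_iff.2 fun i _ => hz0 i) fun h => ?_
  refine hs (fun i => conj (z⁻¹ i)) (fun i => ?_) ?_
  · rw [Complex.conj_im, Pi.inv_apply, Complex.inv_im, neg_div, neg_neg]
    exact div_pos (hz i) (Complex.normSq_pos.2 (hz0 i))
  · rw [aeval_conj, h, map_zero]

end Flip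

section ExtProd

variable {σ τ R : Type*} [CommSemiring R] {p : MvPolynomial σ ℝ} {q : MvPolynomial τ ℝ}

/-- The product `p(x) q(y)` of two polynomials in disjoint sets of variables. -/
noncomputable def extProd (p : MvPolynomial σ R) (q : MvPolynomial τ R) :
    MvPolynomial (σ ⊕ τ) R :=
  rename Sum.inl p * rename Sum.inr q

theorem aeval_extProd {A : Type*} [CommSemiring A] [Algebra R A] (z : σ ⊕ τ → A)
    (p : MvPolynomial σ R) (q : MvPolynomial τ R) :
    aeval z (extProd p q) = aeval (z ∘ Sum.inl) p * aeval (z ∘ Sum.inr) q := by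
  rw [extProd, map_mul, aeval_rename, aeval_rename]

theorem eval_extProd (x : σ ⊕ τ → R) (p : MvPolynomial σ R) (q : MvPolynomial τ R) :
    eval x (extProd p q) = eval (x ∘ Sum.inl) p * eval (x ∘ Sum.inr) q :=
  aeval_extProd x p q

theorem notMem_vars_rename {f : σ → τ} {k : τ} (hk : k ∉ Set.range f) (p : MvPolynomial σ R) :
    k ∉ (rename f p).vars := fun h =>
  let ⟨i, _, hi⟩ := mem_vars_rename f p h
  hk ⟨i, hi⟩

theorem degreeOf_inl_extProd_le (p : MvPolynomial σ R) (q : MvPolynomial τ R) (i : σ) :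
    degreeOf (Sum.inl i) (extProd p q) ≤ degreeOf i p := by
  refine (degreeOf_mul_le _ _ _).trans ?_
  rw [degreeOf_rename_of_injective Sum.inl_injective,
    not_not.1 (mem_vars_iff_degreeOf_ne_zero.not.1 (notMem_vars_rename (by simp) q)), add_zero]

theorem degreeOf_inr_extProd_le (p : MvPolynomial σ R) (q : MvPolynomial τ R) (j : τ) :
    degreeOf (Sum.inr j) (extProd p q) ≤ degreeOf j q := by
  refine (degreeOf_mul_le _ _ _).trans ?_
  rw [degreeOf_rename_of_injective Sum.inr_injective,
    not_not.1 (mem_vars_iff_degreeOf_ne_zero.not.1 (notMem_vars_rename (by simp) p)), zero_add]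

theorem pderiv_inl_extProd (i : σ) (p : MvPolynomial σ R) (q : MvPolynomial τ R) :
    pderiv (Sum.inl i) (extProd p q) = extProd (pderiv i p) q := by
  rw [extProd, pderiv_mul, pderiv_rename Sum.inl_injective,
    pderiv_eq_zero_of_notMem_vars (notMem_vars_rename (by simp) q), mul_zero, add_zero, extProd]

theorem pderiv_inr_extProd (j : τ) (p : MvPolynomial σ R) (q : MvPolynomial τ R) :
    pderiv (Sum.inr j) (extProd p q) = extProd p (pderiv j q) := by
  rw [extProd, pderiv_mul, pderiv_rename Sum.inr_injective,
    pderiv_eq_zero_of_notMem_vars (notMem_vars_rename (by simp) p), zero_mul, zero_add, extProd]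

theorem barrier_inl_extProd {b : τ → ℝ} (hb : eval b q ≠ 0) (a : σ → ℝ) (i : σ) :
    barrier (extProd p q) (Sum.inl i) (Sum.elim a b) = barrier p i a := by
  rw [barrier, pderiv_inl_extProd, eval_extProd, eval_extProd, Sum.elim_comp_inl,
    Sum.elim_comp_inr, mul_div_mul_right _ _ hb, barrier]

theorem barrier_inr_extProd {a : σ → ℝ} (ha : eval a p ≠ 0) (b : τ → ℝ) (j : τ) :
    barrier (extProd p q) (Sum.inr j) (Sum.elim a b) = barrier q j b := by
  rw [barrier, pderiv_inr_extProd, eval_extProd, eval_extProd, Sum.elim_comp_inl,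
    Sum.elim_comp_inr, mul_div_mul_left _ _ ha, barrier]

theorem MultiAffine.extProd (hp : MultiAffine p) (hq : MultiAffine q) :
    MultiAffine (extProd p q) := by
  rw [multiAffine_iff_degreeOf_le] at *
  rintro (i | j)
  · exact (degreeOf_inl_extProd_le p q i).trans (hp i)
  · exact (degreeOf_inr_extProd_le p q j).trans (hq j)

theorem RealStable.extProd (hp : RealStable p) (hq : RealStable q) :
    RealStable (extProd p q) := fun z hz => by
  rw [aeval_extProd]
  exact mul_ne_zero (hp _ fun i => hz _) (hq _ fun j => hz _)

theorem AboveRoots.extProd {a : σ → ℝ} {b : τ → ℝ} (ha : AboveRoots p a) (hb : AboveRoots q b) :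
    AboveRoots (extProd p q) (Sum.elim a b) := fun t ht => by
  rw [eval_extProd]
  exact mul_ne_zero (ha (t ∘ Sum.inl) fun i => ht _) (hb (t ∘ Sum.inr) fun j => ht _)

end ExtProd

section Symbol

theorem derivation_commute_mulLeft {R A : Type*} [CommSemiring R] [CommSemiring A]
    [Algebra R A] (D : Derivation R A A) {v : A} (hv : D v = 0) :
    Commute (D : Module.End R A) (LinearMap.mulLeft R v) := by
  ext x
  simp [hv]

theorem derivation_list_prod_eq_zero {R A : Type*} [CommSemiring R] [CommSemiring A]
    [Algebra R A] (D : Derivation R A A) {L : List A} (hL : ∀ v ∈ L, D v = 0) : D L.prod = 0 := by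
  induction L with
  | nil => exact D.map_one_eq_zero
  | cons v L ih =>
    rw [List.prod_cons, D.leibniz, ih fun w hw => hL w (List.mem_cons_of_mem v hw),
      hL v List.mem_cons_self, smul_zero, smul_zero, add_zero]

theorem list_prod_derivation_pow_apply {ι R A : Type*} [CommSemiring R] [CommSemiring A]
    [Algebra R A] (D : ι → Derivation R A A) (e : ι → ℕ) (u : ι → A)
    (hD : ∀ i j, Commute (D i : Module.End R A) (D j)) (hu : Pairwise fun i j => D i (u j) = 0)
    {L : List ι} (hL : L.Nodup) :
    (L.map fun i => (D i : Module.End R A) ^ e i).prod (L.map u).prod =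
      (L.map fun i => ((D i : Module.End R A) ^ e i) (u i)).prod := by
  induction L with
  | nil => rfl
  | cons i L ih =>
    obtain ⟨hi, hL⟩ := List.nodup_cons.1 hL
    have hne {j : ι} (hj : j ∈ L) : j ≠ i := ne_of_mem_of_not_mem hj hi
    have hu' (j : ι) (hj : j ∈ L) : D i (((D j : Module.End R A) ^ e j) (u j)) = 0 := by
      have hcomm := LinearMap.congr_fun ((hD i j).pow_right (e j)).eq (u j)
      simpa [hu (hne hj).symm] using hcomm
    have hleft : Commute (L.map fun j => (D j : Module.End R A) ^ e j).prod
        (LinearMap.mulLeft R (u i)) := by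
      refine (Commute.list_prod_right _ _ ?_).symm
      simp only [List.mem_map, forall_exists_index, and_imp, forall_apply_eq_imp_iff₂]
      exact fun j hj => ((derivation_commute_mulLeft (D j) (hu (hne hj))).pow_left _).symm
    have hright : D i (L.map fun j => ((D j : Module.End R A) ^ e j) (u j)).prod = 0 :=
      derivation_list_prod_eq_zero (D i) (by simpa using hu')
    have hleft' := LinearMap.congr_fun hleft.eq (L.map u).prod
    have hright' := LinearMap.congr_fun
      ((derivation_commute_mulLeft (D i) hright).pow_left (e i)).eq (u i)
    simp only [Module.End.mul_apply, LinearMap.mulLeft_apply] at hleft' hright'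
    simp only [List.map_cons, List.prod_cons]
    rw [Module.End.mul_apply, hleft', ih hL, mul_comm (u i), hright', mul_comm]

variable {σ R : Type*} [CommRing R]

theorem applyMon_eq_list_prod [Fintype σ] (m : σ →₀ ℕ) (p : MvPolynomial σ ℝ) :
    applyMon m p = (Finset.univ.toList.map fun i =>
      ((pderiv i : Derivation ℝ _ _) : Module.End ℝ (MvPolynomial σ ℝ)) ^ m i).prod p := by
  rw [applyMon]
  induction (Finset.univ : Finset σ).toList with
  | nil => rfl
  | cons i L ih =>
    rw [List.foldr_cons, ih, List.map_cons, List.prod_cons, Module.End.mul_apply,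
      Module.End.pow_apply]
    rfl

theorem applyMon_smul [Fintype σ] (m : σ →₀ ℕ) (c : ℝ) (p : MvPolynomial σ ℝ) :
    applyMon m (c • p) = c • applyMon m p := by
  rw [applyMon_eq_list_prod, map_smul, applyMon_eq_list_prod]

theorem commute_pderiv (i j : σ) :
    Commute ((pderiv i : Derivation R _ _) : Module.End R (MvPolynomial σ R))
      (pderiv j : Derivation R (MvPolynomial σ R) (MvPolynomial σ R)) :=
  LinearMap.ext (pderiv_pderiv_comm i j)

theorem commute_pairDeriv (i j k l : σ) :
    Commute ((pairDeriv i j : Derivation R _ _) : Module.End R (MvPolynomial σ R))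
      (pairDeriv k l : Derivation R (MvPolynomial σ R) (MvPolynomial σ R)) :=
  ((commute_pderiv i k).add_right (commute_pderiv i l)).add_left
    ((commute_pderiv j k).add_right (commute_pderiv j l))

variable [Fintype σ]

theorem monomial_eq_smul_prod {R : Type*} [CommSemiring R] (m : σ →₀ ℕ) (c : R) :
    monomial m c = c • ∏ i, X i ^ m i := by
  rw [monomial_eq, Finsupp.prod_fintype _ _ fun _ => pow_zero _, C_mul']

theorem applyMon_prod_X_pow (m α : σ →₀ ℕ) :
    applyMon m (∏ i, X i ^ α i) = ∏ i, (pderiv i)^[m i] (X i ^ α i) := by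
  classical
  rw [applyMon_eq_list_prod, ← Finset.prod_map_toList, ← Finset.prod_map_toList,
    list_prod_derivation_pow_apply _ _ _ commute_pderiv _ (Finset.nodup_toList _)]
  · simp [Module.End.pow_apply]
  · intro i j hij
    simp [pderiv_X_of_ne hij.symm]

theorem iterPairDeriv_prod_X_pow (α β : σ → ℕ) :
    iterPairDeriv (R := R) Sum.inl Sum.inr Finset.univ.toList
        (∏ i : σ, (X (Sum.inl i) ^ α i * X (Sum.inr i) ^ β i)) =
      ∏ i, pairDeriv (Sum.inl i) (Sum.inr i) (X (Sum.inl i) ^ α i * X (Sum.inr i) ^ β i) := by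
  classical
  have h := list_prod_derivation_pow_apply
    (fun i : σ => (pairDeriv (Sum.inl i) (Sum.inr i) : Derivation R _ _))
    (fun _ => 1) (fun i => X (Sum.inl i) ^ α i * X (Sum.inr i) ^ β i)
    (fun _ _ => commute_pairDeriv _ _ _ _)
    (fun i j hij => by simp [pairDeriv_apply, pderiv_X, hij.symm])
    (Finset.nodup_toList Finset.univ)
  simp only [pow_one, Finset.prod_map_toList] at h
  exact h

theorem extProd_monomial {R : Type*} [CommSemiring R] (α β : σ →₀ ℕ) (c d : R) :
    extProd (monomial α c) (monomial β d) =
      (d * c) • ∏ i, (X (Sum.inl i) ^ α i * X (Sum.inr i) ^ β i) := by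
  rw [extProd, monomial_eq_smul_prod, monomial_eq_smul_prod, map_smul, map_smul, smul_mul_smul_comm,
    mul_comm d, map_prod, map_prod, ← Finset.prod_mul_distrib]
  simp only [map_pow, rename_X]

theorem eval_iterPairDeriv_extProd_monomial {α m : σ →₀ ℕ} (hα : ∀ i, α i ≤ 1)
    (hm : ∀ i, m i ≤ 1) (c d : ℝ) (x y : σ → ℝ) :
    eval (Sum.elim x y) (iterPairDeriv Sum.inl Sum.inr Finset.univ.toList
        (extProd (monomial α c) (monomial (Finsupp.equivFunOnFinite.symm fun i => 1 - m i) d))) =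
      d * eval (x + y) (applyMon m (monomial α c)) := by
  rw [extProd_monomial, map_smul, iterPairDeriv_prod_X_pow, monomial_eq_smul_prod,
    applyMon_smul, applyMon_prod_X_pow, smul_eval, smul_eval, map_prod, map_prod, mul_assoc]
  congr 2
  refine Finset.prod_congr rfl fun i _ => ?_
  rw [Finsupp.equivFunOnFinite_symm_apply_apply]
  obtain h | h := Nat.le_one_iff_eq_zero_or_eq_one.1 (hα i) <;>
    obtain h' | h' := Nat.le_one_iff_eq_zero_or_eq_one.1 (hm i) <;>
      simp [h, h', pairDeriv_apply]

theorem eval_iterPairDeriv_extProd_flipPoly {p q : MvPolynomial σ ℝ} (hp : MultiAffine p)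
    (hq : MultiAffine q) (x y : σ → ℝ) :
    eval (Sum.elim x y)
        (iterPairDeriv Sum.inl Sum.inr Finset.univ.toList (extProd p (flipPoly q))) =
      eval (x + y) (diffOp q p) := by
  have happly (m : σ →₀ ℕ) : applyMon m p =
      ∑ α ∈ p.support, applyMon m (monomial α (coeff α p)) := by
    simp only [applyMon_eq_list_prod, ← map_sum, ← as_sum]
  have hext : extProd p (flipPoly q) = ∑ m ∈ q.support, ∑ α ∈ p.support,
      extProd (monomial α (coeff α p))
        (monomial (Finsupp.equivFunOnFinite.symm fun i => 1 - m i) (coeff m q)) := by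
    simp only [extProd, ← Finset.sum_mul, ← Finset.mul_sum, ← map_sum, ← as_sum, flipPoly]
  rw [hext, diffOp]
  simp only [map_sum, smul_eval, happly, Finset.mul_sum]
  exact Finset.sum_congr rfl fun m hm => Finset.sum_congr rfl fun α hα =>
    eval_iterPairDeriv_extProd_monomial (hp α hα) (hq m hm) _ _ x y

end Symbol

theorem analytical_lieb_sokal_general {σ : Type*} [Fintype σ] {p q : MvPolynomial σ ℝ}
    (hps : RealStable p) (hqs : RealStable q) (hpm : MultiAffine p) (hqm : MultiAffine q)
    (hr0 : diffOp q p ≠ 0) {a b : σ → ℝ} (ha : AboveRoots p a) (hb : AboveRoots (flipPoly q) b)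
    {δ : σ → ℝ} (hδ0 : ∀ i, 0 ≤ δ i)
    (hδ : ∀ i, δ i * (barrier p i a + barrier (flipPoly q) i b) ≤ 1) :
    AboveRoots (diffOp q p) (a + b - δ) := by
  classical
  have hr0' : iterPairDeriv Sum.inl Sum.inr Finset.univ.toList (extProd p (flipPoly q)) ≠ 0 := by
    refine fun h => hr0 (MvPolynomial.funext fun x => ?_)
    rw [← add_zero x, ← eval_iterPairDeriv_extProd_flipPoly hpm hqm, h, map_zero, map_zero]
  have hδ' (i : σ) : δ i * (barrier (extProd p (flipPoly q)) (Sum.inl i) (Sum.elim a b) +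
      barrier (extProd p (flipPoly q)) (Sum.inr i) (Sum.elim a b)) ≤ 1 := by
    rw [barrier_inl_extProd hb.eval_ne_zero, barrier_inr_extProd ha.eval_ne_zero]
    exact hδ i
  have habove := (ha.extProd hb).map_iterPairDeriv (hps.extProd (hqs.flipPoly hqm))
    (hpm.extProd (multiAffine_flipPoly q)) hδ0 hδ' hr0'
  have hpoint : Sum.elim a b - (Finset.univ.toList.map fun i => Pi.single (Sum.inl i) (δ i)).sum =
      Sum.elim (a - δ) b := by
    ext (i | i) <;> simp [Finset.sum_map_toList, Finset.sum_apply, Pi.single_apply]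
  rw [hpoint] at habove
  intro t ht
  have hne := habove (Sum.elim t 0) (by rintro (_ | _) <;> simp [ht])
  rw [← Sum.elim_add_add, eval_iterPairDeriv_extProd_flipPoly hpm hqm] at hne
  rwa [show a + b - δ + t = a - δ + t + (b + 0) by abel]

/-- **An analytical Lieb–Sokal lemma.** If `a` is above the roots of `p` and `b` is
above the roots of the flip `q̄`, then `a + b - (1/φ₁,…,1/φₙ)` is above the roots of
`q(∂)p`, where `φᵢ = (∂ᵢp/p)(a) + (∂ᵢq̄/q̄)(b)`. -/
theorem analytical_lieb_sokal {n : ℕ} (p q : MvPolynomial (Fin n) ℝ)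
    (hp0 : p ≠ 0) (hq0 : q ≠ 0) (hps : RealStable p) (hqs : RealStable q)
    (hpm : MultiAffine p) (hqm : MultiAffine q)
    (hr0 : diffOp q p ≠ 0)
    (a b : Fin n → ℝ) (ha : AboveRoots p a) (hb : AboveRoots (flipPoly q) b)
    (φ : Fin n → ℝ)
    (hφ : ∀ i, φ i =
      MvPolynomial.eval a (MvPolynomial.pderiv i p) / MvPolynomial.eval a p +
        MvPolynomial.eval b (MvPolynomial.pderiv i (flipPoly q)) /
          MvPolynomial.eval b (flipPoly q))
    (hφpos : ∀ i, 0 < φ i) :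
    AboveRoots (diffOp q p) (fun i => a i + b i - 1 / φ i) := by
  refine analytical_lieb_sokal_general hps hqs hpm hqm hr0 ha hb
    (fun i => (one_div_pos.2 (hφpos i)).le) fun i => ?_
  rw [barrier, barrier, ← hφ, one_div_mul_cancel (hφpos i).ne']
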